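/- Let β = √((5+√17)/2) and let Δ be the graph with the 15 vertices {*, a, b, c, d, e, d̃, c̃, b̃, ã, *̃, f, g, h, h̃} and the 14 edges *–a, a–b, b–c, c–d, d–e, e–d̃, d̃–c̃, c̃–b̃, b̃–ã, ã–*̃, e–f, f–g, g–h, g–h̃. Let A be the (real symmetric) adjacency matrix of Δ. Then the strictly positive vector μ given by μ(*) = μ(*̃) = 1, μ(a) = μ(ã) = β, μ(b) = μ(b̃) = μ(h) = μ(h̃) = β² − 1, μ(c) = μ(c̃) = β³ − 2β, μ(d) = μ(d̃) = 2β² − 1, μ(e) = β³ + β, μ(f) = 2β², μ(g) = β³ − β satisfies A·μ = β·μ; moreover β is an eigenvalue of A and every eigenvalue t of A satisfies |t| ≤ β (so the operator norm of A equals β). -/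

import Mathlib

namespace AsaedaHaagerupStmt2

/-- Vertex indexing: 0 = *, 1 = a, 2 = b, 3 = c, 4 = d, 5 = e, 6 = d̃,
7 = c̃, 8 = b̃, 9 = ã, 10 = *̃, 11 = f, 12 = g, 13 = h, 14 = h̃. -/
def edges : List (Fin 15 × Fin 15) :=
  [(0, 1), (1, 2), (2, 3), (3, 4), (4, 5), (5, 6), (6, 7), (7, 8), (8, 9),
   (9, 10), (5, 11), (11, 12), (12, 13), (12, 14)]

/-- The adjacency matrix of the graph Δ. -/
def A : Matrix (Fin 15) (Fin 15) ℝ :=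
  fun i j => if (i, j) ∈ edges ∨ (j, i) ∈ edges then 1 else 0

noncomputable def beta : ℝ := Real.sqrt ((5 + Real.sqrt 17) / 2)

/-- The Perron–Frobenius vector μ. -/
noncomputable def mu : Fin 15 → ℝ :=
  ![1, beta, beta ^ 2 - 1, beta ^ 3 - 2 * beta, 2 * beta ^ 2 - 1,
    beta ^ 3 + beta, 2 * beta ^ 2 - 1, beta ^ 3 - 2 * beta, beta ^ 2 - 1,
    beta, 1, 2 * beta ^ 2, beta ^ 3 - beta, beta ^ 2 - 1, beta ^ 2 - 1]

/-! If `w` is positive and a matrix `M` satisfies `∑ j, ‖M i j‖ * w j ≤ r * w i` for all `i`, then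
comparing an eigenvector `v` with `w` at an index `i` where `‖v i‖ / w i` is largest shows that no
eigenvalue of `M` exceeds `r` in norm. A positive eigenvector of a nonnegative matrix satisfies
this with equality, so its eigenvalue dominates the spectrum; for `Δ` this vector is `μ`. -/

theorem norm_eigenvalue_le_of_sum_norm_mul_le {ι R : Type*} [Fintype ι] [NormedRing R]
    [NormMulClass R] {M : Matrix ι ι R} {w : ι → ℝ} {r : ℝ} (hw : ∀ i, 0 < w i)
    (hM : ∀ i, ∑ j, ‖M i j‖ * w j ≤ r * w i) {t : R} {v : ι → R} (hv : v ≠ 0)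
    (hMv : M.mulVec v = t • v) : ‖t‖ ≤ r := by
  obtain ⟨k, hk⟩ := Function.ne_iff.mp hv
  have : Nonempty ι := ⟨k⟩
  obtain ⟨i, hmax⟩ := Finite.exists_max fun j => ‖v j‖ / w j
  set c := ‖v i‖ / w i with hc
  have hvi : ‖v i‖ = c * w i := (div_eq_iff (hw i).ne').mp hc.symm
  have hle (j : ι) : ‖v j‖ ≤ c * w j := (div_le_iff₀ (hw j)).mp (hmax j)
  have hc_pos : 0 < c := (div_pos (norm_pos_iff.mpr hk) (hw k)).trans_le (hmax k)
  have hvi_pos : 0 < ‖v i‖ := hvi ▸ mul_pos hc_pos (hw i)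
  refine le_of_mul_le_mul_right ?_ hvi_pos
  calc ‖t‖ * ‖v i‖ = ‖∑ j, M i j * v j‖ := by
        rw [← norm_mul]; exact congrArg norm (congrFun hMv i).symm
    _ ≤ ∑ j, ‖M i j‖ * ‖v j‖ := by
        simpa only [norm_mul] using norm_sum_le Finset.univ fun j => M i j * v j
    _ ≤ ∑ j, ‖M i j‖ * (c * w j) := by gcongr with j; exact hle j
    _ = c * ∑ j, ‖M i j‖ * w j := by simp only [Finset.mul_sum, mul_left_comm]
    _ ≤ c * (r * w i) := by gcongr; exact hM i
    _ = r * ‖v i‖ := by rw [hvi, mul_left_comm]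

theorem abs_eigenvalue_le_of_pos_eigenvector {ι : Type*} [Fintype ι] {M : Matrix ι ι ℝ}
    (hM : ∀ i j, 0 ≤ M i j) {w : ι → ℝ} {r : ℝ} (hw : ∀ i, 0 < w i) (hMw : M.mulVec w = r • w)
    {t : ℝ} {v : ι → ℝ} (hv : v ≠ 0) (hMv : M.mulVec v = t • v) : |t| ≤ r := by
  refine norm_eigenvalue_le_of_sum_norm_mul_le hw (fun i => ?_) hv hMv
  simp only [Real.norm_of_nonneg (hM i _)]
  exact (congrFun hMw i).le

theorem beta_pos : 0 < beta := by
  unfold beta; positivity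

theorem beta_sq : beta ^ 2 = (5 + √17) / 2 :=
  Real.sq_sqrt (by positivity)

theorem beta_pow_four : beta ^ 4 = 5 * beta ^ 2 - 2 := by
  have sqrt_sq : √17 ^ 2 = (17 : ℝ) := Real.sq_sqrt (by norm_num)
  calc beta ^ 4 = (beta ^ 2) ^ 2 := by ring
    _ = 5 * beta ^ 2 - 2 := by rw [beta_sq]; linear_combination sqrt_sq / 4

theorem two_lt_beta_sq : 2 < beta ^ 2 := by
  rw [beta_sq]
  linarith [Real.sqrt_nonneg 17]

theorem mu_pos (i : Fin 15) : 0 < mu i := by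
  have pos := beta_pos
  have sq_gt := two_lt_beta_sq
  have b_pos : 0 < beta ^ 2 - 1 := by linarith
  have c_pos : 0 < beta ^ 3 - 2 * beta := by
    linear_combination mul_pos pos (sub_pos.mpr sq_gt)
  have d_pos : 0 < 2 * beta ^ 2 - 1 := by linarith
  have e_pos : 0 < beta ^ 3 + beta := by positivity
  have f_pos : 0 < 2 * beta ^ 2 := by positivity
  have g_pos : 0 < beta ^ 3 - beta := by linarith
  fin_cases i <;> first | exact one_pos | assumption

theorem A_nonneg (i j : Fin 15) : 0 ≤ A i j := by
  unfold A; split_ifs <;> norm_num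

theorem A_mulVec (v : Fin 15 → ℝ) :
    A.mulVec v =
      ![v 1, v 0 + v 2, v 1 + v 3, v 2 + v 4, v 3 + v 5, v 4 + v 6 + v 11, v 5 + v 7,
        v 6 + v 8, v 7 + v 9, v 8 + v 10, v 9, v 5 + v 12, v 11 + v 13 + v 14, v 12, v 12] := by
  ext i
  fin_cases i <;> simp [Matrix.mulVec, dotProduct, Fin.sum_univ_succ, A, edges, add_assoc]

theorem A_mulVec_mu : A.mulVec mu = beta • mu := by
  rw [A_mulVec]
  ext i
  -- The quartic equation of `beta` is needed exactly at the vertices c, c̃, e and g.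
  fin_cases i <;>
    simp only [mu, Fin.reduceFinMk, Fin.mk_one, Fin.zero_eta, Fin.isValue, Matrix.cons_val,
      Pi.smul_apply, smul_eq_mul] <;>
    first | ring1 | linear_combination -beta_pow_four

theorem asaeda_haagerup_stmt2 :
    (∀ i, 0 < mu i) ∧
    A.mulVec mu = beta • mu ∧
    (∃ v : Fin 15 → ℝ, v ≠ 0 ∧ A.mulVec v = beta • v) ∧
    (∀ t : ℝ, (∃ v : Fin 15 → ℝ, v ≠ 0 ∧ A.mulVec v = t • v) → |t| ≤ beta) := by
  have mu_ne_zero : mu ≠ 0 := fun h => (mu_pos 0).ne' (congrFun h 0)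
  refine ⟨mu_pos, A_mulVec_mu, ⟨mu, mu_ne_zero, A_mulVec_mu⟩, ?_⟩
  rintro t ⟨v, hv, hAv⟩
  exact abs_eigenvalue_le_of_pos_eigenvector A_nonneg mu_pos A_mulVec_mu hv hAv

end AsaedaHaagerupStmt2
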